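/- Let k, s be positive integers with s ≥ k ≥ 4. Let F* ⊆ binom([n],k) be a (k,s)-homogeneous family with intersection pattern J, and suppose J has rank k, or J has rank k−1 and is of type 2. Then for every F ∈ F* there exist two distinct vertices u, v ∈ F such that {u} is the kernel of some s-star in F* and {v} is the kernel of some s-star in F*. -/

import Mathlib

open Finset

/-- The finsets in `S` form an s-star (Δ-system) in `G` with kernel `A`:
`S` consists of `s` members of `G` whose pairwise intersections all equal `A`. -/
def IsStarWithKernel {α : Type*} [DecidableEq α] (G : Finset (Finset α)) (s : ℕ)
    (A : Finset α) (S : Finset (Finset α)) : Prop :=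
  S ⊆ G ∧ S.card = s ∧ ∀ E₁ ∈ S, ∀ E₂ ∈ S, E₁ ≠ E₂ → E₁ ∩ E₂ = A

/-- The pattern Π(S) of a set S relative to the partition (X_1, …, X_k):
the set of indices i with S ∩ X_i ≠ ∅. -/
def pattern {k n : ℕ} (X : Fin k → Finset (Fin n)) (S : Finset (Fin n)) : Finset (Fin k) :=
  Finset.univ.filter fun i => (S ∩ X i).Nonempty

/-- `G` is a (k,s)-homogeneous family with k-partition `X` and intersection pattern `J`:
`X` partitions the vertex set, every member of `G` is a k-set meeting each part in exactly
one vertex, `J` is an intersection-closed family of proper subsets of [k], every member `F`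
of `G` has Π(I(F,G)) = J, and every intersection `F ∩ F'` of distinct members is the kernel
of an s-star in `G` containing `F`. -/
def IsHomogeneous (k s : ℕ) {n : ℕ} (G : Finset (Finset (Fin n)))
    (X : Fin k → Finset (Fin n)) (J : Finset (Finset (Fin k))) : Prop :=
  (∀ v : Fin n, ∃! i : Fin k, v ∈ X i) ∧
  (∀ F ∈ G, F.card = k ∧ ∀ i : Fin k, (F ∩ X i).card = 1) ∧
  (∀ B ∈ J, B ≠ Finset.univ) ∧
  (∀ A ∈ J, ∀ B ∈ J, A ∩ B ∈ J) ∧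
  (∀ F ∈ G, (G.erase F).image (fun F' => pattern X (F ∩ F')) = J) ∧
  (∀ F ∈ G, ∀ F' ∈ G, F' ≠ F → ∃ S : Finset (Finset (Fin n)),
      IsStarWithKernel G s (F ∩ F') S ∧ F ∈ S)

/-- The rank of a family `L` of subsets of [k]: the minimum cardinality of a set
`D ⊆ [k]` contained in no member of `L`. -/
noncomputable def patRank (k : ℕ) (L : Finset (Finset (Fin k))) : ℕ :=
  sInf {p : ℕ | ∃ D : Finset (Fin k), D.card = p ∧ ∀ B ∈ L, ¬ D ⊆ B}

/-- A family `L` of proper subsets of [k] (of rank k-1) is of type 1 if there is an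
`x ∈ [k]` with `[k] ∖ {x} ∉ L` but `[k] ∖ {y} ∈ L` for every `y ≠ x`. -/
def IsType1 {k : ℕ} (L : Finset (Finset (Fin k))) : Prop :=
  ∃ x : Fin k, Finset.univ.erase x ∉ L ∧ ∀ y : Fin k, y ≠ x → Finset.univ.erase y ∈ L

/-!
Call `x ∈ [k]` *missing* when `[k] ∖ {x} ∉ J`. Rank at least `k - 1` says that each
`[k] ∖ {x, y}` lies below a member of `J`, so `[k] ∖ {x, y} ∈ J` for distinct missing `x, y`.
Hence an index `j ≠ i` can be separated from `i` by a member of `J` if `j` is not missing, or if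
there is a second missing index besides `i` and `j`. Intersecting the separating sets gives
`{i} ∈ J` unless there is exactly one missing index other than `i`. Since the number of missing
indices is not `1` (that would be type 1), the exception occurs only if there are two of them and
`i` is one; as `k ≥ 4`, at least two singletons remain in `J`. Finally, `{i} ∈ J` says that the
vertex of `F` in the `i`-th part is the whole of some `F ∩ F'`, hence the kernel of a star.
-/

section IntersectionClosedFamilies

variable {α : Type*} [DecidableEq α] {J : Finset (Finset α)}

theorem singleton_mem_of_separated [Nontrivial α] (hinf : InfClosed (J : Set (Finset α))) {i : α}
    (hsep : ∀ j ≠ i, ∃ B ∈ J, i ∈ B ∧ j ∉ B) : {i} ∈ J := by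
  have hne : {B ∈ J | i ∈ B}.Nonempty := by
    obtain ⟨j, hji⟩ := exists_ne i
    obtain ⟨B, hB, hiB, -⟩ := hsep j hji
    exact ⟨B, mem_filter.2 ⟨hB, hiB⟩⟩
  have hinter : {B ∈ J | i ∈ B}.inf' hne id = {i} := by
    ext j
    simp only [mem_inf', mem_filter, id, mem_singleton]
    refine ⟨fun hj ↦ by_contra fun hji ↦ ?_, by rintro rfl B ⟨-, hiB⟩; exact hiB⟩
    obtain ⟨B, hB, hiB, hjB⟩ := hsep j hji
    exact hjB (hj B ⟨hB, hiB⟩)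
  rw [← hinter]
  exact hinf.finsetInf'_mem hne fun B hB ↦ (mem_filter.1 hB).1

variable [Fintype α]

/-- The elements whose complement, a coatom of the Boolean lattice `Finset α`, is missing from
`J`. The family `J` is of type 1 when there is exactly one of them. -/
def missingCoatoms (J : Finset (Finset α)) : Finset α :=
  {x | univ.erase x ∉ J}

theorem mem_missingCoatoms {x : α} : x ∈ missingCoatoms J ↔ univ.erase x ∉ J := by
  simp [missingCoatoms]

theorem univ_erase_mem_of_subset (huniv : univ ∉ J) {B : Finset α} (hB : B ∈ J) {x : α}
    (hxB : univ.erase x ⊆ B) : univ.erase x ∈ J := by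
  have hx : x ∉ B := fun hx ↦ huniv <| by
    have hB_univ : B = univ := univ_subset_iff.1 (insert_erase (mem_univ x) ▸ insert_subset hx hxB)
    rwa [← hB_univ]
  rwa [hxB.antisymm (subset_erase.2 ⟨subset_univ B, hx⟩)]

theorem compl_pair_mem_of_mem_missingCoatoms (huniv : univ ∉ J) {x y : α}
    (hxy : ∃ B ∈ J, {x, y}ᶜ ⊆ B) (hx : x ∈ missingCoatoms J) (hy : y ∈ missingCoatoms J) :
    {x, y}ᶜ ∈ J := by
  obtain ⟨B, hB, hxyB⟩ := hxy
  rw [mem_missingCoatoms] at hx hy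
  have hxB : x ∉ B := fun hxB ↦ hy <| univ_erase_mem_of_subset huniv hB (by grind [mem_compl])
  have hyB : y ∉ B := fun hyB ↦ hx <| univ_erase_mem_of_subset huniv hB (by grind [mem_compl])
  have hBxy : B ⊆ {x, y}ᶜ := by grind [mem_compl]
  rwa [hxyB.antisymm hBxy]

theorem singleton_mem_of_card_missingCoatoms_erase_ne_one [Nontrivial α] (huniv : univ ∉ J)
    (hinf : InfClosed (J : Set (Finset α)))
    (hpair : ∀ x y : α, x ≠ y → ∃ B ∈ J, {x, y}ᶜ ⊆ B) {i : α}
    (hi : #((missingCoatoms J).erase i) ≠ 1) : {i} ∈ J := by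
  refine singleton_mem_of_separated hinf fun j hji ↦ ?_
  by_cases hj : univ.erase j ∈ J
  · exact ⟨univ.erase j, hj, by simp [hji.symm], by simp⟩
  have hj : j ∈ missingCoatoms J := mem_missingCoatoms.2 hj
  have hj' : j ∈ (missingCoatoms J).erase i := mem_erase.2 ⟨hji, hj⟩
  obtain ⟨l, hl, hlj⟩ := exists_mem_ne
    (Nat.lt_of_le_of_ne (card_pos.2 ⟨j, hj'⟩) hi.symm) j
  obtain ⟨hli, hl⟩ := mem_erase.1 hl
  exact ⟨{j, l}ᶜ, compl_pair_mem_of_mem_missingCoatoms huniv (hpair j l hlj.symm) hj hl,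
    by simp [hji.symm, hli.symm], by simp⟩

theorem exists_ne_singleton_mem_of_card_missingCoatoms_ne_one (hcard : 4 ≤ Fintype.card α)
    (huniv : univ ∉ J) (hinf : InfClosed (J : Set (Finset α)))
    (hpair : ∀ x y : α, x ≠ y → ∃ B ∈ J, {x, y}ᶜ ⊆ B) (hmissing : #(missingCoatoms J) ≠ 1) :
    ∃ i j : α, i ≠ j ∧ {i} ∈ J ∧ {j} ∈ J := by
  have : Nontrivial α := Fintype.one_lt_card_iff_nontrivial.1 (by lia)
  have hsingleton {i : α} (hi : #((missingCoatoms J).erase i) ≠ 1) : {i} ∈ J :=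
    singleton_mem_of_card_missingCoatoms_erase_ne_one huniv hinf hpair hi
  by_cases htwo : #(missingCoatoms J) = 2
  · have hcompl : 1 < #(missingCoatoms J)ᶜ := by rw [card_compl]; lia
    obtain ⟨i, hi, j, hj, hij⟩ := one_lt_card.1 hcompl
    have hgood {l : α} (hl : l ∈ (missingCoatoms J)ᶜ) : {l} ∈ J :=
      hsingleton (by rwa [erase_eq_of_notMem (mem_compl.1 hl)])
    exact ⟨i, j, hij, hgood hi, hgood hj⟩
  · have hgood (l : α) : {l} ∈ J := hsingleton (by rw [card_erase_eq_ite]; split_ifs <;> lia)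
    obtain ⟨i, j, hij⟩ := exists_pair_ne α
    exact ⟨i, j, hij, hgood i, hgood j⟩

end IntersectionClosedFamilies

section Rank

variable {k : ℕ} {J : Finset (Finset (Fin k))}

theorem exists_superset_of_card_lt_patRank {D : Finset (Fin k)} (hD : #D < patRank k J) :
    ∃ B ∈ J, D ⊆ B := by
  by_contra! hnot
  exact Nat.notMem_of_lt_sInf hD ⟨D, rfl, hnot⟩

theorem exists_compl_pair_subset_of_le_patRank (hrank : k - 1 ≤ patRank k J) {x y : Fin k}
    (hxy : x ≠ y) : ∃ B ∈ J, {x, y}ᶜ ⊆ B := by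
  have hpair : #{x, y} ≤ k := (card_le_univ _).trans_eq (Fintype.card_fin k)
  refine exists_superset_of_card_lt_patRank ?_
  rw [card_compl, Fintype.card_fin]
  rw [card_pair hxy] at hpair ⊢
  lia

theorem isType1_iff_card_missingCoatoms_eq_one :
    IsType1 J ↔ #(missingCoatoms J) = 1 := by
  simp only [IsType1, card_eq_one, eq_singleton_iff_unique_mem, mem_missingCoatoms]
  exact exists_congr fun x ↦ and_congr_right' <| forall_congr' fun _ ↦ not_imp_comm

theorem not_isType1_of_patRank_eq (huniv : univ ∉ J) (hrank : patRank k J = k) :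
    ¬ IsType1 J := by
  rintro ⟨x, hx, -⟩
  have hcard : #(univ.erase x) < patRank k J := by
    rw [hrank]
    exact (card_erase_lt_of_mem (mem_univ x)).trans_eq (card_fin k)
  obtain ⟨B, hB, hxB⟩ := exists_superset_of_card_lt_patRank hcard
  exact hx (univ_erase_mem_of_subset huniv hB hxB)

theorem exists_ne_singleton_mem_of_patRank (hk : 4 ≤ k) (huniv : univ ∉ J)
    (hinf : InfClosed (J : Set (Finset (Fin k))))
    (hJ : patRank k J = k ∨ (patRank k J = k - 1 ∧ ¬ IsType1 J)) :
    ∃ i j : Fin k, i ≠ j ∧ {i} ∈ J ∧ {j} ∈ J := by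
  have hrank : k - 1 ≤ patRank k J := by lia
  have htype : ¬ IsType1 J := hJ.elim (not_isType1_of_patRank_eq huniv) And.right
  exact exists_ne_singleton_mem_of_card_missingCoatoms_ne_one (by rwa [Fintype.card_fin])
    huniv hinf (fun _ _ ↦ exists_compl_pair_subset_of_le_patRank hrank)
    (isType1_iff_card_missingCoatoms_eq_one.not.1 htype)

end Rank

section Homogeneous

variable {k s n : ℕ} {G : Finset (Finset (Fin n))} {X : Fin k → Finset (Fin n)}
  {J : Finset (Finset (Fin k))}

theorem exists_eq_singleton_of_pattern_eq_singleton (hX : ∀ v, ∃ i, v ∈ X i)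
    {A : Finset (Fin n)} {i : Fin k} (hpattern : pattern X A = {i}) (hcard : #(A ∩ X i) ≤ 1) :
    ∃ u ∈ X i, A = {u} := by
  have hmem (j : Fin k) : (A ∩ X j).Nonempty ↔ j = i := by
    rw [← mem_singleton, ← hpattern, pattern, mem_filter_univ]
  have hAX : A ⊆ X i := fun v hv ↦ by
    obtain ⟨j, hj⟩ := hX v
    exact (hmem j).1 ⟨v, mem_inter.2 ⟨hv, hj⟩⟩ ▸ hj
  have hne : (A ∩ X i).Nonempty := (hmem i).2 rfl
  rw [inter_eq_left.2 hAX] at hcard hne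
  obtain ⟨u, rfl⟩ := card_eq_one.1 (hcard.antisymm hne.card_pos)
  exact ⟨u, singleton_subset_iff.1 hAX, rfl⟩

namespace IsHomogeneous

theorem univ_notMem (hG : IsHomogeneous k s G X J) : univ ∉ J :=
  fun huniv ↦ hG.2.2.1 univ huniv rfl

theorem infClosed (hG : IsHomogeneous k s G X J) : InfClosed (J : Set (Finset (Fin k))) :=
  fun A hA B hB ↦ hG.2.2.2.1 A hA B hB

theorem exists_star_of_singleton_mem (hG : IsHomogeneous k s G X J) {F : Finset (Fin n)}
    (hF : F ∈ G) {i : Fin k} (hi : {i} ∈ J) :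
    ∃ u ∈ F, u ∈ X i ∧ ∃ S, IsStarWithKernel G s {u} S ∧ F ∈ S := by
  obtain ⟨hX, htransversal, -, -, hpatterns, hstar⟩ := hG
  rw [← hpatterns F hF] at hi
  obtain ⟨F', hF', hpattern⟩ := mem_image.1 hi
  obtain ⟨hne, hF'⟩ := mem_erase.1 hF'
  have hcard : #(F ∩ F' ∩ X i) ≤ 1 :=
    (card_le_card (inter_subset_inter_right inter_subset_left)).trans_eq
      ((htransversal F hF).2 i)
  obtain ⟨u, huX, hu⟩ :=
    exists_eq_singleton_of_pattern_eq_singleton (fun v ↦ (hX v).exists) hpattern hcard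
  have huF : u ∈ F := inter_subset_left (hu.symm.subset (mem_singleton_self u))
  exact ⟨u, huF, huX, hu ▸ hstar F hF F' hF' hne⟩

end IsHomogeneous

theorem homogeneous_two_kernel_vertices_general (hk : 4 ≤ k) (hG : IsHomogeneous k s G X J)
    (hJ : patRank k J = k ∨ (patRank k J = k - 1 ∧ ¬ IsType1 J)) {F : Finset (Fin n)}
    (hF : F ∈ G) :
    ∃ u ∈ F, ∃ v ∈ F, u ≠ v ∧ (∃ S, IsStarWithKernel G s {u} S ∧ F ∈ S) ∧
      (∃ S, IsStarWithKernel G s {v} S ∧ F ∈ S) := by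
  obtain ⟨i, j, hij, hi, hj⟩ :=
    exists_ne_singleton_mem_of_patRank hk hG.univ_notMem hG.infClosed hJ
  obtain ⟨u, huF, hui, hu⟩ := hG.exists_star_of_singleton_mem hF hi
  obtain ⟨v, hvF, hvj, hv⟩ := hG.exists_star_of_singleton_mem hF hj
  have huv : u ≠ v := fun huv ↦ hij ((hG.1 u).unique hui (huv ▸ hvj))
  exact ⟨u, huF, v, hvF, huv, hu, hv⟩

end Homogeneous

/-- Corollary 3.6: if s ≥ k ≥ 4 and the intersection pattern J of a (k,s)-homogeneous family
has rank k, or has rank k-1 and is of type 2, then every member F contains two distinct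
vertices u, v such that {u} and {v} are each the kernel of an s-star in the family. -/
theorem homogeneous_two_kernel_vertices (k s n : ℕ) (hk : 4 ≤ k) (hs : k ≤ s)
    (G : Finset (Finset (Fin n))) (X : Fin k → Finset (Fin n)) (J : Finset (Finset (Fin k)))
    (hG : IsHomogeneous k s G X J)
    (hJ : patRank k J = k ∨ (patRank k J = k - 1 ∧ ¬ IsType1 J)) :
    ∀ F ∈ G, ∃ u ∈ F, ∃ v ∈ F, u ≠ v ∧
      (∃ S : Finset (Finset (Fin n)), IsStarWithKernel G s {u} S) ∧
      (∃ S : Finset (Finset (Fin n)), IsStarWithKernel G s {v} S) := fun _ hF ↦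
  let ⟨u, hu, v, hv, huv, ⟨S, hS, _⟩, T, hT, _⟩ :=
    homogeneous_two_kernel_vertices_general hk hG hJ hF
  ⟨u, hu, v, hv, huv, ⟨S, hS⟩, T, hT⟩
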